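/- Suppose $\{v_n\}$ and $\{w_m\}$ are $\gamma$-uniformly distributed sequences in $[0,1]^d$, $d \geq 2$, with $\gamma \in (0,1/2]$. Let $\frac{1}{100} \leq a \leq b$, let $\Omega_{a,b} = \{(x,y) \in [0,1]^d \times [0,1]^d : a \leq x \cdot y \leq b\}$, and let $\psi$ be a smooth nonnegative function supported in the open cube $(0,1)^d$. Then $\sum_{\{(n,m) \in [1,N]^2 : a \leq v_n \cdot w_m \leq b\}} \psi(v_n)\psi(w_m) = N^2 \iint_{\Omega_{a,b}} \psi(x)\psi(y)\,dx\,dy + R(a,b,N)$, where for every $\epsilon > 0$ there is $C_\epsilon$ with $|R(a,b,N)| \leq C_\epsilon N^{2 - \gamma + \epsilon}$. -/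

import Mathlib

open Finset MeasureTheory

/-- Euclidean norm of an integer vector `k ∈ ℤ^d`. -/
noncomputable def intNorm {d : ℕ} (k : Fin d → ℤ) : ℝ :=
  Real.sqrt (∑ i, ((k i : ℝ)) ^ 2)

/-- The Euclidean dot product on `[0,1]^d ⊂ ℝ^d`. -/
def dotP {d : ℕ} (x y : Fin d → ℝ) : ℝ := ∑ i, x i * y i

/-- A sequence `{v_n}` in `[0,1]^d` is `γ`-uniformly distributed. -/
def IsGammaUD {d : ℕ} (γ : ℝ) (v : ℕ → Fin d → ℝ) : Prop :=
  ∀ ε : ℝ, 0 < ε → ∃ C : ℝ, 0 < C ∧ ∀ k : Fin d → ℤ, k ≠ 0 → ∀ N : ℕ, 1 ≤ N →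
    ‖(N : ℂ)⁻¹ * ∑ n ∈ Finset.range N,
        Complex.exp (2 * Real.pi * Complex.I * (∑ i, (k i : ℝ) * v n i))‖
      ≤ C * intNorm k ^ ε * (N : ℝ) ^ (-γ)

/-! Write the error as `∑ φ(v_n) D_w(v_n) + N ∫ ψ(y) D_v(y) dy`, where `D_w(x)` is the discrepancy
of the weighted points `w_m` on the slab `a ≤ x ⬝ᵥ y ≤ b`, and `D_v(y)` that of the `v_n`. It
suffices to bound each discrepancy by `O(N ^ (1 - γ + ε))`, uniformly in `x` and in `a`, `b`.

Expanding the smooth compactly supported weight in a Fourier series upgrades the hypothesis from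
integer to real frequencies `η`, with a loss of `(1 + ‖η‖) ^ ε`. Smoothing the indicator of `[a, b]`
to a trapezoid of slope `1 / δ` makes its Fourier series converge absolutely, and since a character
of `x ⬝ᵥ y` with frequency `n` is a character of `y` with frequency `n • x`, the discrepancy of the
trapezoid is `O(N ^ (1 - γ) δ ^ (-2 ε))`. The smoothing error is dominated by trapezoids on two
slabs of width `O(δ)`, whose volume is `O(δ / ‖x‖)`. Points with `‖x‖ < a / d` see an empty slab, so
`a ≥ c > 0` bounds `1 / ‖x‖` on the rest, and `δ = 1 / N` gives the theorem.
-/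

open Function FourierTransform
open scoped ContDiff Matrix

section Discrepancy

/-- The discrepancy `∑_{n < N} ψ(w_n) f(w_n) - N ∫ ψ f` of the points `w 0, …, w (N - 1)` weighted
by `ψ`, as a functional of the test function `f`. -/
noncomputable def discrepancy {X E : Type*} [MeasureSpace X] [NormedAddCommGroup E]
    [NormedSpace ℝ E] (ψ : X → ℝ) (w : ℕ → X) (N : ℕ) (f : X → E) : E :=
  ∑ n ∈ range N, ψ (w n) • f (w n) - (N : ℝ) • ∫ x, ψ x • f x

variable {X Y E : Type*} [MeasureSpace X] [MeasureSpace Y] [NormedAddCommGroup E]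
  [NormedSpace ℝ E] {ψ : X → ℝ} {w : ℕ → X} {N : ℕ} {s : Set X}

lemma discrepancy_ofReal (f : X → ℝ) :
    discrepancy ψ w N (fun x => (f x : ℂ)) = ((discrepancy ψ w N f : ℝ) : ℂ) := by
  simp only [discrepancy, smul_eq_mul, Complex.real_smul, Complex.ofReal_sub, Complex.ofReal_sum,
    Complex.ofReal_mul, ← integral_complex_ofReal]

lemma discrepancy_const_mul (c : ℂ) (f : X → ℂ) :
    discrepancy ψ w N (fun x => c * f x) = c * discrepancy ψ w N f := by
  simp only [discrepancy, Complex.real_smul, mul_left_comm _ c, integral_const_mul, mul_sum,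
    mul_sub]

lemma discrepancy_add {f g : X → E} (hf : Integrable fun x => ψ x • f x)
    (hg : Integrable fun x => ψ x • g x) :
    discrepancy ψ w N (fun x => f x + g x) = discrepancy ψ w N f + discrepancy ψ w N g := by
  simp only [discrepancy, smul_add, sum_add_distrib, integral_add hf hg]
  abel

lemma discrepancy_congr {f g : X → E} (hψ : support ψ ⊆ s)
    (hfg : Set.EqOn f g s) : discrepancy ψ w N f = discrepancy ψ w N g := by
  have hψfg : ∀ x, ψ x • f x = ψ x • g x := fun x => by
    by_cases hx : ψ x = 0
    · simp only [hx, zero_smul]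
    · rw [hfg (hψ hx)]
  simp only [discrepancy, hψfg]

lemma discrepancy_eq_zero {f : X → E} (hψ : support ψ ⊆ s) (hf : Set.EqOn f 0 s) :
    discrepancy ψ w N f = 0 := by
  rw [discrepancy_congr hψ hf]
  simp [discrepancy]

lemma hasSum_discrepancy [CompleteSpace E] {κ : Type*} [Countable κ] {F : κ → X → E} {f : X → E}
    {B : κ → ℝ} (hψ : Integrable ψ) (hψs : support ψ ⊆ s) (hw : ∀ n, w n ∈ s)
    (hF : ∀ j, AEStronglyMeasurable (F j)) (hFB : ∀ j x, ‖F j x‖ ≤ B j) (hB : Summable B)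
    (hf : ∀ x ∈ s, HasSum (fun j => F j x) (f x)) :
    HasSum (fun j => discrepancy ψ w N (F j)) (discrepancy ψ w N f) := by
  have hint : ∀ j, Integrable fun x => ψ x • F j x := fun j =>
    hψ.smul_bdd (B j) (hF j) (.of_forall (hFB j))
  have hsum : Summable fun j => ∫ x, ‖ψ x • F j x‖ := by
    refine .of_nonneg_of_le (fun j => by positivity) (fun j => ?_) (hB.mul_left (∫ x, ‖ψ x‖))
    rw [← integral_mul_const]
    refine integral_mono (hint j).norm (hψ.norm.mul_const _) fun x => ?_
    rw [norm_smul]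
    gcongr
    exact hFB j x
  have hψf : ∀ x, ∑' j, ψ x • F j x = ψ x • f x := fun x => by
    by_cases hx : ψ x = 0
    · simp [hx]
    · exact ((hf x (hψs hx)).const_smul _).tsum_eq
  have h := hasSum_integral_of_summable_integral_norm hint hsum
  simp only [hψf] at h
  exact (hasSum_sum fun n _ => (hf _ (hw n)).const_smul _).sub (h.const_smul _)

/-- Both the sum and the integral change by at most their value on `χ h`, and the sum on `χ h` is
again a discrepancy plus an integral. -/
lemma abs_discrepancy_le_of_abs_sub_le {χ f g h : X → ℝ} (hψχ : ∀ x, |ψ x| ≤ χ x)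
    (hfg : ∀ x, |f x - g x| ≤ h x) (hf : Integrable fun x => ψ x * f x)
    (hg : Integrable fun x => ψ x * g x) (hh : Integrable fun x => χ x * h x) :
    |discrepancy ψ w N f| ≤
      |discrepancy ψ w N g| + |discrepancy χ w N h| + 2 * N * ∫ x, χ x * h x := by
  have hdiff : ∀ x, |ψ x * f x - ψ x * g x| ≤ χ x * h x := fun x => by
    rw [← mul_sub, abs_mul]
    exact mul_le_mul (hψχ x) (hfg x) (abs_nonneg _) ((abs_nonneg _).trans (hψχ x))
  have hsum : |∑ n ∈ range N, ψ (w n) * f (w n) - ∑ n ∈ range N, ψ (w n) * g (w n)| ≤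
      ∑ n ∈ range N, χ (w n) * h (w n) := by
    rw [← sum_sub_distrib]
    exact (abs_sum_le_sum_abs _ _).trans (sum_le_sum fun n _ => hdiff _)
  have hint : |N * (∫ x, ψ x * f x) - N * ∫ x, ψ x * g x| ≤ N * ∫ x, χ x * h x := by
    rw [← mul_sub, abs_mul, Nat.abs_cast, ← integral_sub hf hg]
    gcongr
    rw [← Real.norm_eq_abs]
    exact norm_integral_le_of_norm_le hh (.of_forall hdiff)
  simp only [discrepancy, smul_eq_mul]
  rw [abs_le] at hsum hint ⊢
  constructor <;>
  linarith [le_abs_self (∑ n ∈ range N, ψ (w n) * g (w n) - N * ∫ x, ψ x * g x),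
    neg_abs_le (∑ n ∈ range N, ψ (w n) * g (w n) - N * ∫ x, ψ x * g x),
    le_abs_self (∑ n ∈ range N, χ (w n) * h (w n) - N * ∫ x, χ x * h x)]

lemma sum_sum_sub_integral_integral_eq [SFinite (volume : Measure X)]
    [SFinite (volume : Measure Y)] {φ : X → ℝ} {ψ : Y → ℝ} {K : X → Y → ℝ} (v : ℕ → X) (w : ℕ → Y)
    (N : ℕ) (hφ : Integrable φ) (hψ : Integrable ψ) (hK : Measurable (uncurry K))
    {B : ℝ} (hKB : ∀ x y, |K x y| ≤ B) :
    ∑ n ∈ range N, ∑ m ∈ range N, φ (v n) * ψ (w m) * K (v n) (w m) -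
        (N : ℝ) ^ 2 * ∫ x, ∫ y, φ x * ψ y * K x y =
      ∑ n ∈ range N, φ (v n) * discrepancy ψ w N (K (v n)) +
        N * ∫ y, ψ y * discrepancy φ v N (K · y) := by
  have hφψK : Integrable (uncurry fun x y => φ x * ψ y * K x y) (volume.prod volume) :=
    (hφ.mul_prod hψ).mul_bdd hK.aestronglyMeasurable (.of_forall fun p => hKB p.1 p.2)
  have hψK : ∀ n, Integrable fun y => φ (v n) * (ψ y * K (v n) y) := fun n =>
    (hψ.mul_bdd (hK.comp measurable_prodMk_left).aestronglyMeasurable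
      (.of_forall (hKB (v n)))).const_mul _
  have hint : Integrable fun y => N * ∫ x, φ x * ψ y * K x y := hφψK.integral_prod_right.const_mul _
  have hinner : ∀ y, ψ y * discrepancy φ v N (K · y) =
      ∑ n ∈ range N, φ (v n) * (ψ y * K (v n) y) - N * ∫ x, φ x * ψ y * K x y := fun y => by
    simp only [discrepancy, smul_eq_mul, mul_sub, mul_sum, mul_right_comm _ (ψ y),
      mul_left_comm (ψ y), integral_mul_const]
    ring
  simp only [hinner]
  rw [integral_sub (integrable_finsetSum _ fun n _ => hψK n) hint,
    integral_finsetSum _ fun n _ => hψK n, integral_const_mul, integral_integral_swap hφψK]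
  simp only [discrepancy, smul_eq_mul, integral_const_mul, mul_sub, mul_sum, sum_sub_distrib,
    mul_left_comm (N : ℝ), mul_assoc]
  ring

lemma abs_sum_sum_sub_integral_integral_le [SFinite (volume : Measure X)]
    [SFinite (volume : Measure Y)] {φ : X → ℝ} {ψ : Y → ℝ} {K : X → Y → ℝ} {v : ℕ → X} {w : ℕ → Y}
    {t : Set Y} (hφ : Integrable φ) (hψ : Integrable ψ) (hψt : support ψ ⊆ t)
    (hv : ∀ n, v n ∈ s) (hK : Measurable (uncurry K)) {A B D : ℝ} (hKB : ∀ x y, |K x y| ≤ B)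
    (hφD : ∀ x, |φ x| ≤ D) (hw : ∀ x ∈ s, |discrepancy ψ w N (K x)| ≤ A)
    (hv' : ∀ y ∈ t, |discrepancy φ v N (K · y)| ≤ A) :
    |∑ n ∈ range N, ∑ m ∈ range N, φ (v n) * ψ (w m) * K (v n) (w m) -
        (N : ℝ) ^ 2 * ∫ x, ∫ y, φ x * ψ y * K x y| ≤ N * ((D + ∫ y, |ψ y|) * A) := by
  have hsum : |∑ n ∈ range N, φ (v n) * discrepancy ψ w N (K (v n))| ≤ N * (D * A) := by
    refine (abs_sum_le_sum_abs _ _).trans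
      ((sum_le_card_nsmul _ _ (D * A) fun n _ => ?_).trans_eq ?_)
    · rw [abs_mul]
      exact mul_le_mul (hφD _) (hw _ (hv n)) (abs_nonneg _) ((abs_nonneg _).trans (hφD (v n)))
    · rw [card_range, nsmul_eq_mul]
  have hint : |∫ y, ψ y * discrepancy φ v N (K · y)| ≤ (∫ y, |ψ y|) * A := by
    rw [← integral_mul_const, ← Real.norm_eq_abs]
    refine norm_integral_le_of_norm_le (hψ.abs.mul_const A) (.of_forall fun y => ?_)
    rw [norm_mul, Real.norm_eq_abs, Real.norm_eq_abs]
    by_cases hy : ψ y = 0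
    · simp [hy]
    · gcongr
      exact hv' y (hψt hy)
  rw [sum_sum_sub_integral_integral_eq v w N hφ hψ hK hKB]
  calc _ ≤ N * (D * A) + N * ((∫ y, |ψ y|) * A) := by
        refine (abs_add_le _ _).trans (add_le_add hsum ?_)
        rw [abs_mul, Nat.abs_cast]
        gcongr
    _ = _ := by ring

end Discrepancy

section PiFourier

variable {ι : Type*} [Fintype ι]

/-- The Fourier transform on `ι → ℝ` with respect to the dot product. Mathlib's `𝓕` does not apply
because the norm of `ι → ℝ` does not come from an inner product. -/
noncomputable def piFourier (f : (ι → ℝ) → ℂ) (η : ι → ℝ) : ℂ :=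
  ∫ y, (𝐞 (-(η ⬝ᵥ y)) : ℂ) * f y

lemma piFourier_zero (f : (ι → ℝ) → ℂ) : piFourier f 0 = ∫ y, f y := by
  simp [piFourier]

lemma piFourier_modulation (f : (ι → ℝ) → ℂ) (ξ η : ι → ℝ) :
    piFourier (fun y => 𝐞 (ξ ⬝ᵥ y) * f y) η = piFourier f (η - ξ) := by
  simp only [piFourier, ← mul_assoc, ← Circle.coe_mul, ← AddChar.map_add_eq_mul, sub_dotProduct,
    neg_sub, neg_add_eq_sub]

lemma piFourier_eq_fourier_comp_ofLp (f : (ι → ℝ) → ℂ) (η : ι → ℝ) :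
    piFourier f η = 𝓕 (fun x : EuclideanSpace ℝ ι => f x.ofLp) (WithLp.toLp 2 η) := by
  rw [Real.fourier_eq, ← (PiLp.volume_preserving_toLp ι).integral_comp
    (MeasurableEquiv.toLp 2 (ι → ℝ)).measurableEmbedding]
  simp only [piFourier, Circle.smul_def, smul_eq_mul, EuclideanSpace.inner_toLp_toLp, star_trivial]

lemma exists_norm_piFourier_le {f : (ι → ℝ) → ℂ} (hf : ContDiff ℝ ∞ f) (hc : HasCompactSupport f)
    (M : ℕ) : ∃ C, 0 ≤ C ∧ ∀ η, ‖piFourier f η‖ ≤ C / (1 + ‖η‖) ^ M := by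
  have hcLp : HasCompactSupport fun x : EuclideanSpace ℝ ι => f x.ofLp :=
    hc.comp_homeomorph (EuclideanSpace.equiv ι ℝ).toHomeomorph
  let Φ := hcLp.toSchwartzMap (hf.comp (EuclideanSpace.equiv ι ℝ).contDiff)
  have hΦ : ∀ x, (1 + ‖x‖) ^ M * ‖(𝓕 Φ) x‖ ≤ _ := fun x => by
    simpa only [norm_iteratedFDeriv_zero] using SchwartzMap.one_add_le_sup_seminorm_apply (𝕜 := ℝ)
      (m := (M, 0)) le_rfl le_rfl (𝓕 Φ) x
  refine ⟨_, (by positivity : (0 : ℝ) ≤ _).trans (hΦ 0), fun η => ?_⟩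
  have hη : ‖η‖ ≤ ‖WithLp.toLp 2 η‖ :=
    (pi_norm_le_iff_of_nonneg (norm_nonneg _)).2 (PiLp.norm_apply_le (WithLp.toLp 2 η))
  rw [le_div_iff₀' (by positivity)]
  refine le_trans ?_ (hΦ (WithLp.toLp 2 η))
  rw [SchwartzMap.fourier_coe, piFourier_eq_fourier_comp_ofLp]
  gcongr
  rfl

end PiFourier

section UnitCube

/-- The open unit cube `(0, 1)^ι`. -/
def openUnitCube (ι : Type*) : Set (ι → ℝ) := {x | ∀ i, x i ∈ Set.Ioo (0 : ℝ) 1}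

variable {ι : Type*} {E : Type*} [Zero E] {g : (ι → ℝ) → E}

lemma openUnitCube_subset_Icc : openUnitCube ι ⊆ Set.Icc 0 1 :=
  fun _ hx => ⟨fun i => (hx i).1.le, fun i => (hx i).2.le⟩

lemma support_subset_Icc_of_tsupport_subset_openUnitCube (hg : tsupport g ⊆ openUnitCube ι) :
    support g ⊆ Set.Icc 0 1 :=
  (subset_tsupport g).trans (hg.trans openUnitCube_subset_Icc)

lemma hasCompactSupport_of_tsupport_subset_openUnitCube (hg : tsupport g ⊆ openUnitCube ι) :
    HasCompactSupport g :=
  .of_support_subset_isCompact isCompact_Icc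
    (support_subset_Icc_of_tsupport_subset_openUnitCube hg)

lemma isOpen_openUnitCube [Finite ι] : IsOpen (openUnitCube ι) := by
  simpa only [openUnitCube, Set.pi, Set.mem_univ, true_imp_iff] using
    isOpen_set_pi (Set.toFinite (Set.univ : Set ι)) fun _ _ => isOpen_Ioo (a := (0 : ℝ)) (b := 1)

lemma integrable_of_tsupport_subset_openUnitCube [Fintype ι] {g : (ι → ℝ) → ℝ}
    (hgc : Continuous g) (hg : tsupport g ⊆ openUnitCube ι) : Integrable g :=
  hgc.integrable_of_hasCompactSupport (hasCompactSupport_of_tsupport_subset_openUnitCube hg)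

/-- The function on the torus whose values on `(0, 1]^ι` are those of `g`. -/
noncomputable def periodization (g : (ι → ℝ) → E) (z : UnitAddTorus ι) : E :=
  g fun i => (AddCircle.equivIoc 1 0 (z i) : ℝ)

lemma periodization_coe (hg : tsupport g ⊆ openUnitCube ι) {y : ι → ℝ}
    (hy : y ∈ Set.Icc (0 : ι → ℝ) 1) : periodization g (fun i => (y i : UnitAddCircle)) = g y := by
  by_cases h0 : ∀ i, y i ≠ 0
  · have hy' : ∀ i, y i ∈ Set.Ioc (0 : ℝ) (0 + 1) := fun i =>
      ⟨lt_of_le_of_ne (hy.1 i) (h0 i).symm, by simpa using hy.2 i⟩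
    simp only [periodization, AddCircle.equivIoc_coe_of_mem (hy' _)]
  · push Not at h0
    obtain ⟨i, hi⟩ := h0
    have hzero : ∀ x : ι → ℝ, x i ∉ Set.Ioo (0 : ℝ) 1 → g x = 0 := fun x hx =>
      notMem_support.1 fun hgx => hx (hg (subset_tsupport g hgx) i)
    have h1 : ((y i : ℝ) : UnitAddCircle) = ((1 : ℝ) : UnitAddCircle) := by
      rw [hi, AddCircle.coe_period, QuotientAddGroup.mk_zero]
    rw [hzero y (by simp [hi]), periodization, hzero]
    simp only [h1]
    rw [AddCircle.equivIoc_coe_of_mem (by simp)]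
    simp

lemma isQuotientMap_Icc_unitAddTorus : Topology.IsQuotientMap
    fun (y : Set.Icc (0 : ι → ℝ) 1) (i : ι) => ((y : ι → ℝ) i : UnitAddCircle) := by
  have hcont : Continuous fun (y : Set.Icc (0 : ι → ℝ) 1) (i : ι) =>
      ((y : ι → ℝ) i : UnitAddCircle) :=
    continuous_pi fun i => (AddCircle.continuous_mk' 1).comp
      ((continuous_apply i).comp continuous_subtype_val)
  refine hcont.isClosedMap.isQuotientMap hcont fun z => ?_
  have hz : ∀ i, (AddCircle.equivIoc 1 0 (z i) : ℝ) ∈ Set.Ioc (0 : ℝ) (0 + 1) :=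
    fun i => (AddCircle.equivIoc 1 0 (z i)).2
  exact ⟨⟨fun i => AddCircle.equivIoc 1 0 (z i), fun i => (hz i).1.le,
    fun i => (hz i).2.trans_eq (zero_add 1)⟩, funext fun i => AddCircle.coe_equivIoc⟩

lemma continuous_periodization [TopologicalSpace E] (hgc : Continuous g)
    (hg : tsupport g ⊆ openUnitCube ι) : Continuous (periodization g) := by
  rw [isQuotientMap_Icc_unitAddTorus.continuous_iff]
  refine (hgc.comp continuous_subtype_val).congr fun y => ?_
  exact (periodization_coe hg y.2).symm

end UnitCube

section FourierSeries

variable {ι : Type*} [Fintype ι] {g : (ι → ℝ) → ℂ}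

lemma mFourier_coe (l : ι → ℤ) (y : ι → ℝ) :
    UnitAddTorus.mFourier l (fun i => (y i : UnitAddCircle)) = 𝐞 (((↑) ∘ l : ι → ℝ) ⬝ᵥ y) := by
  simp only [UnitAddTorus.mFourier, ContinuousMap.coe_mk, fourier_coe_apply, dotProduct,
    ← Complex.exp_sum, Real.fourierChar_apply, comp_apply]
  push_cast
  simp only [mul_sum, sum_mul, div_one]
  congr! 2 with i
  ring

lemma mFourierCoeff_periodization (hg : tsupport g ⊆ openUnitCube ι) (l : ι → ℤ) :
    UnitAddTorus.mFourierCoeff (periodization g) l = piFourier g ((↑) ∘ l) := by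
  have hbox : {x : ι → ℝ | ∀ i, x i ∈ Set.Ioc ((0 : ι → ℝ) i) ((0 : ι → ℝ) i + 1)} =
      Set.univ.pi fun _ => Set.Ioc 0 1 := by
    ext x
    simp
  have hg0 : ∀ x ∉ Set.univ.pi fun _ : ι => Set.Ioc (0 : ℝ) 1, g x = 0 := fun x hx =>
    notMem_support.1 fun hgx => hx fun i _ =>
      Set.Ioo_subset_Ioc_self (hg (subset_tsupport g hgx) i)
  have hout : ∫ y in Set.univ.pi fun _ => Set.Ioc 0 1, (𝐞 (-(((↑) ∘ l : ι → ℝ) ⬝ᵥ y)) : ℂ) * g y =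
      piFourier g ((↑) ∘ l) :=
    setIntegral_eq_integral_of_forall_compl_eq_zero fun x hx => by rw [hg0 x hx, mul_zero]
  have hneg : ((↑) ∘ (-l) : ι → ℝ) = -((↑) ∘ l) := funext fun i => Int.cast_neg (l i)
  rw [UnitAddTorus.mFourierCoeff_eq_integral _ l 0, hbox, ← hout]
  refine setIntegral_congr_fun (.univ_pi fun i => measurableSet_Ioc) fun x hx => ?_
  rw [periodization_coe hg ⟨fun i => (hx i trivial).1.le, fun i => (hx i trivial).2⟩,
    mFourier_coe, smul_eq_mul, hneg, neg_dotProduct]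

lemma hasSum_piFourier_mul_fourierChar (hgc : Continuous g) (hg : tsupport g ⊆ openUnitCube ι)
    (hsum : Summable fun l : ι → ℤ => piFourier g ((↑) ∘ l)) {y : ι → ℝ}
    (hy : y ∈ Set.Icc (0 : ι → ℝ) 1) :
    HasSum (fun l : ι → ℤ => piFourier g ((↑) ∘ l) * 𝐞 (((↑) ∘ l : ι → ℝ) ⬝ᵥ y)) (g y) := by
  have hcoeff : UnitAddTorus.mFourierCoeff (periodization g) = fun l => piFourier g ((↑) ∘ l) :=
    funext (mFourierCoeff_periodization hg)
  have h := UnitAddTorus.hasSum_mFourier_series_apply_of_summable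
    (f := ⟨periodization g, continuous_periodization hgc hg⟩)
    (by simpa only [ContinuousMap.coe_mk, hcoeff]) (fun i => (y i : UnitAddCircle))
  simpa only [hcoeff, mFourier_coe, smul_eq_mul, ContinuousMap.coe_mk,
    periodization_coe hg hy] using h

/-- The frequency `0` contributes exactly `N ∫ g` to the sum. -/
lemma norm_sum_sub_integral_le_tsum (hgc : Continuous g) (hg : tsupport g ⊆ openUnitCube ι)
    {w : ℕ → ι → ℝ} (hw : ∀ n, w n ∈ Set.Icc (0 : ι → ℝ) 1) {N : ℕ} {B : (ι → ℤ) → ℝ}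
    (hB0 : 0 ≤ B 0) (hB : ∀ l ≠ 0, ‖∑ n ∈ range N, (𝐞 (((↑) ∘ l : ι → ℝ) ⬝ᵥ w n) : ℂ)‖ ≤ B l)
    (hsum : Summable fun l : ι → ℤ => piFourier g ((↑) ∘ l))
    (hsumB : Summable fun l : ι → ℤ => ‖piFourier g ((↑) ∘ l)‖ * B l) :
    ‖∑ n ∈ range N, g (w n) - N * ∫ y, g y‖ ≤ ∑' l : ι → ℤ, ‖piFourier g ((↑) ∘ l)‖ * B l := by
  classical
  have hzero : ((↑) ∘ (0 : ι → ℤ) : ι → ℝ) = 0 := funext fun i => by simp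
  have hseries := (hasSum_sum fun n (_ : n ∈ range N) =>
    hasSum_piFourier_mul_fourierChar hgc hg hsum (hw n)).sub
      (hasSum_ite_eq (0 : ι → ℤ) (N * ∫ y, g y))
  rw [← hseries.tsum_eq]
  refine tsum_of_norm_bounded hsumB.hasSum fun l => ?_
  rw [← mul_sum]
  by_cases hl : l = 0
  · subst hl
    simpa [hzero, piFourier_zero, mul_comm] using mul_nonneg (norm_nonneg (∫ y, g y)) hB0
  · rw [if_neg hl, sub_zero, norm_mul]
    gcongr
    exact hB l hl

end FourierSeries

section LatticeSums

variable {ι : Type*} [Fintype ι] {M : ℕ}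

lemma norm_intCast_comp (l : ι → ℤ) : ‖((↑) ∘ l : ι → ℝ)‖ = ‖l‖ := by
  have h : ∀ i, ‖(l i : ℝ)‖₊ = ‖l i‖₊ := fun i => NNReal.eq (Int.norm_cast_real (l i))
  simp only [Pi.norm_def, comp_apply, h]

lemma summable_inv_one_add_norm_pow (hM : Fintype.card ι < M) :
    Summable fun l : ι → ℤ => ((1 + ‖l‖) ^ M)⁻¹ := by
  let b := Pi.basisFun ℝ ι
  have hmem : ∀ l : ι → ℤ, ((↑) ∘ l : ι → ℝ) ∈ Submodule.span ℤ (Set.range b) := fun l =>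
    (b.mem_span_iff_repr_mem ℤ _).2 fun i => ⟨l i, by simp [b]⟩
  have hrank : Module.finrank ℤ (Submodule.span ℤ (Set.range b)) = Fintype.card ι :=
    Module.finrank_eq_card_basis (b.restrictScalars ℤ)
  have hinj : Injective fun l => (⟨_, hmem l⟩ : Submodule.span ℤ (Set.range b)) := fun l l' h =>
    funext fun i => by simpa using congr_fun (congr_arg Subtype.val h) i
  have hsum := (ZLattice.summable_norm_zpow (Submodule.span ℤ (Set.range b)) (-M)
    (by rw [hrank]; exact_mod_cast neg_lt_neg (Int.ofNat_lt.2 hM))).comp_injective hinj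
  refine .of_norm_bounded_eventually hsum ?_
  filter_upwards [(Set.finite_singleton (0 : ι → ℤ)).compl_mem_cofinite] with l hl
  have : 0 < ‖l‖ := norm_pos_iff.2 hl
  rw [Real.norm_of_nonneg (by positivity), comp_apply, zpow_neg, zpow_natCast]
  change _ ≤ (‖((↑) ∘ l : ι → ℝ)‖ ^ M)⁻¹
  rw [norm_intCast_comp]
  gcongr
  linarith

lemma one_add_norm_sub_floor_le (ξ : ι → ℝ) (l : ι → ℤ) :
    1 + ‖l - fun i => ⌊ξ i⌋‖ ≤ 2 * (1 + ‖(↑) ∘ l - ξ‖) := by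
  have hfract : ‖fun i => Int.fract (ξ i)‖ ≤ 1 := by
    refine (pi_norm_le_iff_of_nonneg zero_le_one).2 fun i => ?_
    rw [Real.norm_of_nonneg (Int.fract_nonneg _)]
    exact (Int.fract_lt_one _).le
  have hsplit : ((↑) ∘ (l - fun i => ⌊ξ i⌋) : ι → ℝ) =
      ((↑) ∘ l - ξ) + fun i => Int.fract (ξ i) := by
    ext i
    simp only [Pi.add_apply, Pi.sub_apply, comp_apply, Int.cast_sub, ← Int.self_sub_floor]
    ring
  rw [← norm_intCast_comp, hsplit]
  linarith [norm_add_le ((↑) ∘ l - ξ) fun i => Int.fract (ξ i), norm_nonneg ((↑) ∘ l - ξ)]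

lemma exists_tsum_inv_one_add_norm_sub_pow_le (hM : Fintype.card ι < M) :
    ∃ S, ∀ ξ : ι → ℝ, Summable (fun l : ι → ℤ => ((1 + ‖(↑) ∘ l - ξ‖) ^ M)⁻¹) ∧
      ∑' l : ι → ℤ, ((1 + ‖(↑) ∘ l - ξ‖) ^ M)⁻¹ ≤ S := by
  refine ⟨2 ^ M * ∑' l : ι → ℤ, ((1 + ‖l‖) ^ M)⁻¹, fun ξ => ?_⟩
  have hle : ∀ l : ι → ℤ, ((1 + ‖(↑) ∘ l - ξ‖) ^ M)⁻¹ ≤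
      2 ^ M * ((1 + ‖l - fun i => ⌊ξ i⌋‖) ^ M)⁻¹ := fun l => by
    rw [← div_eq_mul_inv, ← inv_div, ← div_pow]
    gcongr
    rw [div_le_iff₀' two_pos]
    exact one_add_norm_sub_floor_le ξ l
  have hshift := (((Equiv.subRight fun i => ⌊ξ i⌋).hasSum_iff).2
    (summable_inv_one_add_norm_pow hM).hasSum).mul_left (2 ^ M)
  have hsum := Summable.of_nonneg_of_le (fun l => by positivity) hle hshift.summable
  exact ⟨hsum, hasSum_le hle hsum.hasSum hshift⟩

lemma norm_rpow_le_one_add_norm_sub_pow_mul {ε : ℝ} (hε : 0 ≤ ε) (ξ : ι → ℝ) (l : ι → ℤ) :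
    ‖l‖ ^ ε ≤ (1 + ‖(↑) ∘ l - ξ‖) ^ ⌈ε⌉₊ * (1 + ‖ξ‖) ^ ε := by
  have hle : ‖l‖ ≤ (1 + ‖(↑) ∘ l - ξ‖) * (1 + ‖ξ‖) := by
    rw [← norm_intCast_comp]
    nlinarith [norm_le_norm_sub_add ((↑) ∘ l) ξ, norm_nonneg ((↑) ∘ l - ξ), norm_nonneg ξ]
  calc ‖l‖ ^ ε ≤ ((1 + ‖(↑) ∘ l - ξ‖) * (1 + ‖ξ‖)) ^ ε := by gcongr
    _ = (1 + ‖(↑) ∘ l - ξ‖) ^ ε * (1 + ‖ξ‖) ^ ε := Real.mul_rpow (by positivity) (by positivity)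
    _ ≤ _ := by
      rw [← Real.rpow_natCast _ ⌈ε⌉₊]
      gcongr
      · exact le_add_of_nonneg_right (norm_nonneg _)
      · exact Nat.le_ceil ε

end LatticeSums

section CharacterSums

variable {ι : Type*} [Fintype ι] {ψ : (ι → ℝ) → ℝ} {w : ℕ → ι → ℝ} {N : ℕ} {A ε : ℝ}

/-- Quantitative equidistribution of the points `w 0, …, w (N - 1)` weighted by `ψ`, tested on
characters: at every real frequency `η` the discrepancy is at most `A * (1 + ‖η‖) ^ ε`. -/
def CharDiscrepancyLE (ψ : (ι → ℝ) → ℝ) (w : ℕ → ι → ℝ) (N : ℕ) (A ε : ℝ) : Prop :=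
  ∀ η : ι → ℝ, ‖discrepancy ψ w N fun y => (𝐞 (η ⬝ᵥ y) : ℂ)‖ ≤ A * (1 + ‖η‖) ^ ε

lemma CharDiscrepancyLE.nonneg (h : CharDiscrepancyLE ψ w N A ε) : 0 ≤ A := by
  simpa using (norm_nonneg _).trans (h 0)

lemma CharDiscrepancyLE.mono {A' : ℝ} (h : CharDiscrepancyLE ψ w N A ε) (hA : A ≤ A') :
    CharDiscrepancyLE ψ w N A' ε :=
  fun η => (h η).trans (by gcongr)

lemma norm_discrepancy_fourierChar_le_tsum (hψ : Continuous ψ)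
    (hψs : tsupport ψ ⊆ openUnitCube ι) (hw : ∀ n, w n ∈ Set.Icc (0 : ι → ℝ) 1)
    {B : (ι → ℤ) → ℝ} (hB0 : 0 ≤ B 0)
    (hB : ∀ l ≠ 0, ‖∑ n ∈ range N, (𝐞 (((↑) ∘ l : ι → ℝ) ⬝ᵥ w n) : ℂ)‖ ≤ B l) (ξ : ι → ℝ)
    (hsum : Summable fun l : ι → ℤ => piFourier (fun y => (ψ y : ℂ)) ((↑) ∘ l - ξ))
    (hsumB : Summable fun l : ι → ℤ => ‖piFourier (fun y => (ψ y : ℂ)) ((↑) ∘ l - ξ)‖ * B l) :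
    ‖discrepancy ψ w N fun y => (𝐞 (ξ ⬝ᵥ y) : ℂ)‖ ≤
      ∑' l : ι → ℤ, ‖piFourier (fun y => (ψ y : ℂ)) ((↑) ∘ l - ξ)‖ * B l := by
  have hFs : tsupport (fun y => 𝐞 (ξ ⬝ᵥ y) * (ψ y : ℂ)) ⊆ openUnitCube ι :=
    (tsupport_mul_subset_right ..).trans
      ((tsupport_comp_subset Complex.ofReal_zero ψ).trans hψs)
  simp only [← piFourier_modulation] at hsum hsumB ⊢
  simpa only [discrepancy, Complex.real_smul, Complex.ofReal_natCast, mul_comm (ψ _ : ℂ)] using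
    norm_sum_sub_integral_le_tsum (by fun_prop) hFs hw hB0 hB hsum hsumB

/-- Decay of the Fourier transform of `ψ` reduces a real frequency `ξ` to the integer frequencies
near `ξ`. -/
lemma exists_charDiscrepancyLE (hψ : ContDiff ℝ ∞ ψ)
    (hψs : tsupport ψ ⊆ openUnitCube ι) (hε : 0 ≤ ε) :
    ∃ C, 0 ≤ C ∧ ∀ (w : ℕ → ι → ℝ) (N : ℕ) (A : ℝ), (∀ n, w n ∈ Set.Icc (0 : ι → ℝ) 1) → 0 ≤ A →
      (∀ l : ι → ℤ, l ≠ 0 →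
        ‖∑ n ∈ range N, (𝐞 (((↑) ∘ l : ι → ℝ) ⬝ᵥ w n) : ℂ)‖ ≤ A * ‖l‖ ^ ε) →
      CharDiscrepancyLE ψ w N (C * A) ε := by
  obtain ⟨C, hC0, hC⟩ := exists_norm_piFourier_le (Complex.ofRealCLM.contDiff.comp hψ)
    (hasCompactSupport_of_tsupport_subset_openUnitCube
      ((tsupport_comp_subset Complex.ofReal_zero ψ).trans hψs)) (Fintype.card ι + 1 + ⌈ε⌉₊)
  obtain ⟨S, hS⟩ := exists_tsum_inv_one_add_norm_sub_pow_le (ι := ι) (Nat.lt_succ_self _)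
  refine ⟨C * S, mul_nonneg hC0 ((tsum_nonneg fun l => by positivity).trans (hS 0).2),
    fun w N A hw hA hwA ξ => ?_⟩
  set c : (ι → ℤ) → ℂ := fun l => piFourier (fun y => (ψ y : ℂ)) ((↑) ∘ l - ξ)
  have hcoeff : ∀ l, ‖c l‖ ≤ C / (1 + ‖(↑) ∘ l - ξ‖) ^ (Fintype.card ι + 1 + ⌈ε⌉₊) :=
    fun l => hC _
  have hsum : Summable c := by
    refine .of_norm_bounded ((hS ξ).1.mul_left C) fun l => (hcoeff l).trans ?_
    rw [div_eq_mul_inv]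
    gcongr
    · exact le_add_of_nonneg_right (norm_nonneg _)
    · exact Nat.le_add_right ..
  have hterm : ∀ l, ‖c l‖ * (A * ‖l‖ ^ ε) ≤
      C * A * (1 + ‖ξ‖) ^ ε * ((1 + ‖(↑) ∘ l - ξ‖) ^ (Fintype.card ι + 1))⁻¹ := fun l => by
    refine (mul_le_mul (hcoeff l) (mul_le_mul_of_nonneg_left
      (norm_rpow_le_one_add_norm_sub_pow_mul hε ξ l) hA) (by positivity)
      (by positivity)).trans_eq ?_
    rw [pow_add _ _ ⌈ε⌉₊]
    field_simp
  have hmajor := (hS ξ).1.mul_left (C * A * (1 + ‖ξ‖) ^ ε)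
  have hsumB := Summable.of_nonneg_of_le (fun l => by positivity) hterm hmajor
  calc _ ≤ ∑' l, ‖c l‖ * (A * ‖l‖ ^ ε) := norm_discrepancy_fourierChar_le_tsum hψ.continuous hψs
        hw (by positivity) hwA ξ hsum hsumB
    _ ≤ C * A * (1 + ‖ξ‖) ^ ε * ∑' l : ι → ℤ, ((1 + ‖(↑) ∘ l - ξ‖) ^ (Fintype.card ι + 1))⁻¹ := by
        rw [← tsum_mul_left]
        exact hsumB.tsum_le_tsum hterm hmajor
    _ ≤ C * A * (1 + ‖ξ‖) ^ ε * S := by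
        gcongr
        exact (hS ξ).2
    _ = C * S * A * (1 + ‖ξ‖) ^ ε := by ring

lemma CharDiscrepancyLE.norm_discrepancy_le_of_hasSum {κ : Type*} [Countable κ] {c : κ → ℂ}
    {ξ : κ → ι → ℝ} {B : κ → ℝ} {f : (ι → ℝ) → ℂ} (h : CharDiscrepancyLE ψ w N A ε)
    (hψ : Integrable ψ) (hψs : support ψ ⊆ Set.Icc 0 1) (hw : ∀ n, w n ∈ Set.Icc (0 : ι → ℝ) 1)
    (hε : 0 ≤ ε) (hcB : ∀ j, ‖c j‖ * (1 + ‖ξ j‖) ^ ε ≤ B j) (hB : Summable B)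
    (hf : ∀ y ∈ Set.Icc (0 : ι → ℝ) 1, HasSum (fun j => c j * 𝐞 (ξ j ⬝ᵥ y)) (f y)) :
    ‖discrepancy ψ w N f‖ ≤ A * ∑' j, B j := by
  have hA := h.nonneg
  have hc : ∀ j, ‖c j‖ ≤ B j := fun j =>
    (le_mul_of_one_le_right (norm_nonneg _)
      (Real.one_le_rpow (le_add_of_nonneg_right (norm_nonneg _)) hε)).trans (hcB j)
  have hsum := hasSum_discrepancy (N := N) (F := fun j y => c j * 𝐞 (ξ j ⬝ᵥ y)) hψ hψs hw
    (fun j => by fun_prop) (fun j y => by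
      rw [norm_mul, Circle.norm_coe, mul_one]
      exact hc j) hB hf
  rw [← hsum.tsum_eq, ← tsum_mul_left]
  refine tsum_of_norm_bounded (hB.mul_left A).hasSum fun j => ?_
  rw [discrepancy_const_mul, norm_mul]
  calc ‖c j‖ * ‖discrepancy ψ w N fun y => (𝐞 (ξ j ⬝ᵥ y) : ℂ)‖
      ≤ ‖c j‖ * (A * (1 + ‖ξ j‖) ^ ε) := by
        gcongr
        exact h _
    _ = A * (‖c j‖ * (1 + ‖ξ j‖) ^ ε) := mul_left_comm _ _ _
    _ ≤ A * B j := by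
        gcongr
        exact hcB j

end CharacterSums

section Trapezoid

/-- The piecewise linear function equal to `1` on `[a, b]` and to `0` outside `[a - δ, b + δ]`. -/
noncomputable def trapezoid (δ a b t : ℝ) : ℝ :=
  (|t - (a - δ)| - |t - a| - |t - b| + |t - (b + δ)|) / (2 * δ)

variable {δ a b t : ℝ}

@[fun_prop]
lemma continuous_trapezoid (δ a b : ℝ) : Continuous (trapezoid δ a b) := by
  unfold trapezoid
  fun_prop

lemma trapezoid_eq_one (hδ : 0 < δ) (ha : a ≤ t) (hb : t ≤ b) : trapezoid δ a b t = 1 := by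
  rw [trapezoid, abs_of_nonneg (by linarith : 0 ≤ t - (a - δ)),
    abs_of_nonneg (by linarith : 0 ≤ t - a), abs_of_nonpos (by linarith : t - b ≤ 0),
    abs_of_nonpos (by linarith : t - (b + δ) ≤ 0)]
  field_simp
  ring

lemma trapezoid_eq_zero_of_le (hδ : 0 ≤ δ) (hab : a ≤ b) (h : t ≤ a - δ) :
    trapezoid δ a b t = 0 := by
  rw [trapezoid, abs_of_nonpos (by linarith : t - (a - δ) ≤ 0),
    abs_of_nonpos (by linarith : t - a ≤ 0), abs_of_nonpos (by linarith : t - b ≤ 0),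
    abs_of_nonpos (by linarith : t - (b + δ) ≤ 0)]
  ring

lemma trapezoid_eq_zero_of_ge (hδ : 0 ≤ δ) (hab : a ≤ b) (h : b + δ ≤ t) :
    trapezoid δ a b t = 0 := by
  rw [trapezoid, abs_of_nonneg (by linarith : 0 ≤ t - (a - δ)),
    abs_of_nonneg (by linarith : 0 ≤ t - a), abs_of_nonneg (by linarith : 0 ≤ t - b),
    abs_of_nonneg (by linarith : 0 ≤ t - (b + δ))]
  ring

lemma trapezoid_mem_Icc (hδ : 0 < δ) (hab : a ≤ b) (t : ℝ) :
    trapezoid δ a b t ∈ Set.Icc (0 : ℝ) 1 := by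
  rw [trapezoid, Set.mem_Icc, le_div_iff₀ (by positivity), div_le_iff₀ (by positivity)]
  rcases abs_cases (t - (a - δ)) with h1 | h1 <;> rcases abs_cases (t - a) with h2 | h2 <;>
    rcases abs_cases (t - b) with h3 | h3 <;> rcases abs_cases (t - (b + δ)) with h4 | h4 <;>
    constructor <;> linarith

lemma trapezoid_le_indicator (hδ : 0 < δ) (hab : a ≤ b) (t : ℝ) :
    trapezoid δ a b t ≤ (Set.Icc (a - δ) (b + δ)).indicator 1 t := by
  by_cases ht : t ∈ Set.Icc (a - δ) (b + δ)
  · rw [Set.indicator_of_mem ht]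
    exact (trapezoid_mem_Icc hδ hab t).2
  · rw [Set.indicator_of_notMem ht]
    rcases le_or_gt t (a - δ) with h | h
    · exact (trapezoid_eq_zero_of_le hδ.le hab h).le
    · exact (trapezoid_eq_zero_of_ge hδ.le hab (not_lt.1 fun h' => ht ⟨h.le, h'.le⟩)).le

lemma abs_indicator_sub_trapezoid_le (hδ : 0 < δ) (hab : a ≤ b) (t : ℝ) :
    |(Set.Icc a b).indicator 1 t - trapezoid δ a b t| ≤
      trapezoid δ (a - δ) a t + trapezoid δ b (b + δ) t := by
  have hleft := trapezoid_mem_Icc hδ (sub_le_self a hδ.le) t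
  have hright := trapezoid_mem_Icc hδ (le_add_of_nonneg_right hδ.le : b ≤ b + δ) t
  have hT := trapezoid_mem_Icc hδ hab t
  by_cases ht : t ∈ Set.Icc a b
  · rw [Set.indicator_of_mem ht, trapezoid_eq_one hδ ht.1 ht.2, Pi.one_apply, sub_self, abs_zero]
    exact add_nonneg hleft.1 hright.1
  rw [Set.indicator_of_notMem ht, zero_sub, abs_neg, abs_of_nonneg hT.1]
  rcases le_or_gt t (a - δ) with h | h
  · rw [trapezoid_eq_zero_of_le hδ.le hab h]
    exact add_nonneg hleft.1 hright.1
  rcases le_or_gt t a with ha | ha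
  · rw [trapezoid_eq_one hδ h.le ha]
    linarith [hT.2, hright.1]
  rcases le_or_gt t (b + δ) with h' | h'
  · rw [trapezoid_eq_one (a := b) hδ (not_lt.1 fun hb => ht ⟨ha.le, hb.le⟩) h']
    linarith [hT.2, hleft.1]
  · rw [trapezoid_eq_zero_of_ge hδ.le hab h'.le]
    exact add_nonneg hleft.1 hright.1

end Trapezoid

section TrapezoidFourier

variable {L δ a b t s : ℝ}

lemma hasSum_inv_sq_mul_fourierChar (hL : 0 < L) (ht : |t| ≤ L) :
    HasSum (fun n : ℤ => 1 / (n : ℂ) ^ 2 * 𝐞 (n / L * t))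
      ((2 * Real.pi ^ 2 * ((t / L) ^ 2 - |t| / L + 1 / 6) : ℝ) : ℂ) := by
  have hseries : HasSum (fun n : ℤ => 1 / (n : ℂ) ^ 2 * 𝐞 (n / L * |t|))
      ((2 * Real.pi ^ 2 * ((t / L) ^ 2 - |t| / L + 1 / 6) : ℝ) : ℂ) := by
    convert hasSum_one_div_pow_mul_fourier_mul_bernoulliFun le_rfl
      (⟨by positivity, (div_le_one hL).2 ht⟩ : |t| / L ∈ Set.Icc (0 : ℝ) 1) using 1
    · funext n
      rw [fourier_coe_apply, Real.fourierChar_apply]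
      congr 2
      push_cast
      ring
    · rw [bernoulliFun_two, div_pow |t|, sq_abs]
      push_cast [Nat.factorial, mul_pow, Complex.I_sq]
      ring
  rcases abs_choice t with h | h
  · rwa [h] at hseries ⊢
  · refine ((Equiv.neg ℤ).hasSum_iff.2 hseries).congr_fun fun n => ?_
    rw [h]
    simp [neg_div]

/-- The Fourier coefficients of the `L`-periodic function that agrees with `trapezoid δ a b` at
distance at most `L` from its four breakpoints. -/
noncomputable def trapezoidCoeff (L δ a b : ℝ) (n : ℤ) : ℂ :=
  if n = 0 then ((b - a + δ) / L : ℝ) else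
    -(L / (4 * Real.pi ^ 2 * δ) : ℝ) * (1 / (n : ℂ) ^ 2) *
      (𝐞 (-(n / L * (a - δ))) - 𝐞 (-(n / L * a)) - 𝐞 (-(n / L * b)) + 𝐞 (-(n / L * (b + δ))))

lemma hasSum_trapezoidCoeff_mul_fourierChar (hδ : δ ≠ 0) (hL : 0 < L)
    (ht : ∀ c ∈ ({a - δ, a, b, b + δ} : Set ℝ), |t - c| ≤ L) :
    HasSum (fun n : ℤ => trapezoidCoeff L δ a b n * 𝐞 (n / L * t)) (trapezoid δ a b t : ℂ) := by
  let Q (c : ℝ) : ℝ := 2 * Real.pi ^ 2 * (((t - c) / L) ^ 2 - |t - c| / L + 1 / 6)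
  have hQ : ∀ c ∈ ({a - δ, a, b, b + δ} : Set ℝ), HasSum
      (fun n : ℤ => 1 / (n : ℂ) ^ 2 * (𝐞 (-(n / L * c)) * 𝐞 (n / L * t))) (Q c : ℂ) :=
    fun c hc => by
      convert hasSum_inv_sq_mul_fourierChar hL (ht c hc) using 4 with n
      rw [← Circle.coe_mul, ← AddChar.map_add_eq_mul, mul_sub, neg_add_eq_sub]
  have htrap : trapezoid δ a b t =
      -(L / (4 * Real.pi ^ 2 * δ)) * (Q (a - δ) - Q a - Q b + Q (b + δ)) + (b - a + δ) / L := by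
    simp only [trapezoid, Q]
    field_simp
    ring
  rw [htrap]
  simp only [Complex.ofReal_add, Complex.ofReal_sub, Complex.ofReal_mul, Complex.ofReal_neg]
  refine ((((((hQ (a - δ) (by simp)).sub (hQ a (by simp))).sub (hQ b (by simp))).add
    (hQ (b + δ) (by simp))).mul_left _).add
      (hasSum_ite_eq (0 : ℤ) (((b - a + δ) / L : ℝ) : ℂ))).congr_fun fun n => ?_
  by_cases hn : n = 0
  · simp [trapezoidCoeff, hn]
  · rw [trapezoidCoeff, if_neg hn, if_neg hn]
    ring

lemma norm_fourierChar_sub_le (hs : 0 ≤ s) (hs1 : s ≤ 1) (u v : ℝ) :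
    ‖(𝐞 u - 𝐞 v : ℂ)‖ ≤ 2 * (Real.pi * |u - v|) ^ s := by
  have hpi : 0 ≤ Real.pi * |u - v| := by positivity
  rcases le_or_gt (Real.pi * |u - v|) 1 with h | h
  · have hsplit : (𝐞 u - 𝐞 v : ℂ) =
        𝐞 v * (Complex.exp (Complex.I * (2 * Real.pi * (u - v) : ℝ)) - 1) := by
      rw [mul_sub, mul_one, mul_comm Complex.I, ← Real.fourierChar_apply, ← Circle.coe_mul,
        ← AddChar.map_add_eq_mul, add_sub_cancel]
    calc ‖(𝐞 u - 𝐞 v : ℂ)‖ ≤ ‖2 * Real.pi * (u - v)‖ := by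
          rw [hsplit, norm_mul, Circle.norm_coe, one_mul]
          exact Real.norm_exp_I_mul_ofReal_sub_one_le
      _ = 2 * (Real.pi * |u - v|) := by
          rw [norm_mul, norm_mul, Real.norm_eq_abs (u - v), Real.norm_of_nonneg two_pos.le,
            Real.norm_of_nonneg Real.pi_pos.le, mul_assoc]
      _ ≤ 2 * (Real.pi * |u - v|) ^ s := by
          gcongr
          exact Real.self_le_rpow_of_le_one hpi h hs1
  · calc ‖(𝐞 u - 𝐞 v : ℂ)‖ ≤ ‖(𝐞 u : ℂ)‖ + ‖(𝐞 v : ℂ)‖ := norm_sub_le _ _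
      _ = 2 * 1 := by rw [Circle.norm_coe, Circle.norm_coe, one_add_one_eq_two, mul_one]
      _ ≤ 2 * (Real.pi * |u - v|) ^ s := by
          gcongr
          exact Real.one_le_rpow h.le hs

lemma norm_trapezoidCoeff_le_of_ne_zero (hδ : 0 < δ) (hL : 0 < L) (hs : 0 ≤ s) (hs1 : s ≤ 1) {n : ℤ}
    (hn : n ≠ 0) :
    ‖trapezoidCoeff L δ a b n‖ ≤ (L / δ) ^ s * (Real.pi * |(n : ℝ)|) ^ (-(1 + s)) := by
  set p : ℝ := Real.pi * |(n : ℝ)| with hp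
  have hp0 : 0 < p := by positivity
  have hdiff : ∀ u v : ℝ, |u - v| = |n / L * δ| →
      ‖(𝐞 u - 𝐞 v : ℂ)‖ ≤ 2 * (p * δ / L) ^ (1 - s) := fun u v huv => by
    convert norm_fourierChar_sub_le (sub_nonneg.2 hs1) (sub_le_self 1 hs) u v using 3
    rw [huv, abs_mul, abs_div, abs_of_pos hδ, abs_of_pos hL, hp]
    ring
  have hleft := hdiff (-(n / L * (a - δ))) (-(n / L * a)) (congr_arg _ (by ring))
  have hright := hdiff (-(n / L * (b + δ))) (-(n / L * b))
    ((abs_sub_comm _ _).trans (congr_arg _ (by ring)))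
  calc ‖trapezoidCoeff L δ a b n‖
      = L / (4 * Real.pi ^ 2 * δ) * (1 / |(n : ℝ)| ^ 2) *
        ‖((𝐞 (-(n / L * (a - δ))) - 𝐞 (-(n / L * a))) +
          (𝐞 (-(n / L * (b + δ))) - 𝐞 (-(n / L * b))) : ℂ)‖ := by
        rw [trapezoidCoeff, if_neg hn, norm_mul, norm_mul, norm_neg, Complex.norm_real,
          Real.norm_of_nonneg (by positivity), norm_div, norm_pow, norm_one, Complex.norm_intCast]
        congr 2
        ring
    _ ≤ L / (4 * Real.pi ^ 2 * δ) * (1 / |(n : ℝ)| ^ 2) *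
        (2 * (p * δ / L) ^ (1 - s) + 2 * (p * δ / L) ^ (1 - s)) := by
        gcongr
        exact (norm_add_le _ _).trans (add_le_add hleft hright)
    _ = (L / δ) ^ s * p ^ (-(1 + s)) := by
        rw [Real.rpow_sub (by positivity), Real.rpow_one, Real.rpow_neg hp0.le,
          Real.rpow_add hp0, Real.rpow_one, Real.div_rpow (by positivity) hL.le,
          Real.mul_rpow hp0.le hδ.le, Real.div_rpow hL.le hδ.le, hp]
        field_simp
        norm_num

lemma norm_trapezoidCoeff_le (hδ : 0 < δ) (hδL : δ ≤ L) (habL : |b - a + δ| ≤ L) (hs : 0 ≤ s)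
    (hs1 : s ≤ 1) (n : ℤ) :
    ‖trapezoidCoeff L δ a b n‖ ≤ (L / δ) ^ s * (1 + |(n : ℝ)|) ^ (-(1 + s)) := by
  have hL : 0 < L := hδ.trans_le hδL
  by_cases hn : n = 0
  · rw [trapezoidCoeff, if_pos hn, hn, Complex.norm_real, Real.norm_eq_abs, abs_div, abs_of_pos hL]
    simpa using (div_le_one_of_le₀ habL hL.le).trans (Real.one_le_rpow ((one_le_div hδ).2 hδL) hs)
  have hn1 : 1 ≤ |(n : ℝ)| := by exact_mod_cast Int.one_le_abs hn
  refine (norm_trapezoidCoeff_le_of_ne_zero hδ hL hs hs1 hn).trans ?_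
  gcongr ?_ * ?_
  refine Real.rpow_le_rpow_of_nonpos (by positivity) ?_ (by linarith)
  nlinarith [Real.two_le_pi]

end TrapezoidFourier

section TrapezoidDiscrepancy

variable {ι : Type*} [Fintype ι] {x y : ι → ℝ}

lemma norm_le_one_of_mem_Icc (hx : x ∈ Set.Icc (0 : ι → ℝ) 1) : ‖x‖ ≤ 1 :=
  (pi_norm_le_iff_of_nonneg zero_le_one).2 fun i => by
    rw [Real.norm_of_nonneg (hx.1 i)]
    exact hx.2 i

lemma abs_dotProduct_le (hy : y ∈ Set.Icc (0 : ι → ℝ) 1) (x : ι → ℝ) :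
    |x ⬝ᵥ y| ≤ Fintype.card ι * ‖x‖ := by
  refine (abs_sum_le_sum_abs _ _).trans
    ((sum_le_card_nsmul _ _ ‖x‖ fun i _ => ?_).trans_eq (nsmul_eq_mul ..))
  rw [abs_mul, abs_of_nonneg (hy.1 i)]
  exact (mul_le_of_le_one_right (abs_nonneg _) (hy.2 i)).trans (norm_le_pi_norm x i)

lemma summable_one_add_abs_int_rpow {r : ℝ} (hr : 1 < r) :
    Summable fun n : ℤ => (1 + |(n : ℝ)|) ^ (-r) := by
  refine .of_norm_bounded_eventually (Real.summable_abs_int_rpow hr) ?_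
  filter_upwards [(Set.finite_singleton (0 : ℤ)).compl_mem_cofinite] with n hn
  have hn0 : 0 < |(n : ℝ)| := abs_pos.2 (Int.cast_ne_zero.2 hn)
  rw [Real.norm_of_nonneg (by positivity)]
  exact Real.rpow_le_rpow_of_nonpos hn0 (le_add_of_nonneg_left zero_le_one) (by linarith)

/-- The frequencies of `trapezoid δ a b (x ⬝ᵥ y)` as a function of `y` are multiples of `x`. -/
lemma CharDiscrepancyLE.abs_discrepancy_trapezoid_le {ψ : (ι → ℝ) → ℝ} {w : ℕ → ι → ℝ} {N : ℕ}
    {A ε R δ a b : ℝ} (h : CharDiscrepancyLE ψ w N A ε) (hψ : Integrable ψ)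
    (hψs : support ψ ⊆ Set.Icc 0 1) (hw : ∀ n, w n ∈ Set.Icc (0 : ι → ℝ) 1) (hε : 0 < ε)
    (hε' : ε ≤ 1 / 2) (hx : ‖x‖ ≤ 1) (ha : |a| ≤ R) (hb : |b| ≤ R) (hδ : 0 < δ) (hδ1 : δ ≤ 1) :
    |discrepancy ψ w N fun y => trapezoid δ a b (x ⬝ᵥ y)| ≤
      A * (((Fintype.card ι + 2 * R + 1) / δ) ^ (2 * ε) *
        ∑' n : ℤ, (1 + |(n : ℝ)|) ^ (-(1 + ε))) := by
  set L : ℝ := Fintype.card ι + 2 * R + 1 with hL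
  have hR : 0 ≤ R := (abs_nonneg a).trans ha
  have hL1 : 1 ≤ L := by
    rw [hL]
    exact le_add_of_nonneg_left (by positivity)
  have hL0 : 0 < L := zero_lt_one.trans_le hL1
  have hcard : (0 : ℝ) ≤ Fintype.card ι := Nat.cast_nonneg _
  rw [abs_le] at ha hb
  have hfreq : ∀ n : ℤ, ‖(n / L : ℝ) • x‖ ≤ |(n : ℝ)| := fun n => by
    rw [norm_smul, Real.norm_eq_abs, abs_div, abs_of_pos hL0]
    exact (mul_le_of_le_one_right (by positivity) hx).trans (div_le_self (abs_nonneg _) hL1)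
  have hcoeff : ∀ n : ℤ, ‖trapezoidCoeff L δ a b n‖ * (1 + ‖(n / L : ℝ) • x‖) ^ ε ≤
      (L / δ) ^ (2 * ε) * (1 + |(n : ℝ)|) ^ (-(1 + ε)) := fun n => by
    have hc := norm_trapezoidCoeff_le (a := a) (b := b) hδ (hδ1.trans hL1)
      (abs_le.2 ⟨by linarith, by linarith⟩) (by linarith : 0 ≤ 2 * ε) (by linarith) n
    calc _ ≤ (L / δ) ^ (2 * ε) * (1 + |(n : ℝ)|) ^ (-(1 + 2 * ε)) * (1 + |(n : ℝ)|) ^ ε := by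
          gcongr
          exact hfreq n
      _ = _ := by
          rw [mul_assoc, ← Real.rpow_add (by positivity)]
          ring_nf
  have hseries : ∀ y ∈ Set.Icc (0 : ι → ℝ) 1, HasSum
      (fun n : ℤ => trapezoidCoeff L δ a b n * 𝐞 (((n / L : ℝ) • x) ⬝ᵥ y))
      (trapezoid δ a b (x ⬝ᵥ y) : ℂ) := fun y hy => by
    have hxy := abs_le.1 ((abs_dotProduct_le hy x).trans (mul_le_of_le_one_right hcard hx))
    simp only [smul_dotProduct, smul_eq_mul]
    refine hasSum_trapezoidCoeff_mul_fourierChar hδ.ne' hL0 fun c hc => abs_le.2 ?_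
    rcases hc with rfl | rfl | rfl | rfl <;> constructor <;> linarith
  rw [← tsum_mul_left, ← Real.norm_eq_abs, ← Complex.norm_real, ← discrepancy_ofReal]
  exact h.norm_discrepancy_le_of_hasSum hψ hψs hw hε.le hcoeff
    ((summable_one_add_abs_int_rpow (by linarith)).mul_left _) hseries

end TrapezoidDiscrepancy

section Slab

variable {ι : Type*} [Fintype ι] {x : ι → ℝ} {α β : ℝ}

/-- Replacing the `i`-th coordinate of `y` by `x ⬝ᵥ y` is a linear map of determinant `x i`. -/
lemma volume_slab_le_of_apply_ne_zero {i : ι} (hi : x i ≠ 0) :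
    volume (Set.Icc (0 : ι → ℝ) 1 ∩ {y | x ⬝ᵥ y ∈ Set.Icc α β}) ≤
      ENNReal.ofReal ((β - α) / |x i|) := by
  classical
  set M : Matrix ι ι ℝ := Matrix.updateRow 1 i x with hM
  have hdet : LinearMap.det (Matrix.toLin' M) = x i := by
    rw [LinearMap.det_toLin', hM, ← Matrix.cramer_transpose_apply, Matrix.transpose_one,
      Matrix.cramer_one, Module.End.one_apply]
  have hMy : ∀ y, Matrix.toLin' M y = update y i (x ⬝ᵥ y) := fun y => by
    rw [Matrix.toLin'_apply, hM, Matrix.updateRow_mulVec, Matrix.one_mulVec]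
  have hsub : Set.Icc (0 : ι → ℝ) 1 ∩ {y | x ⬝ᵥ y ∈ Set.Icc α β} ⊆
      Matrix.toLin' M ⁻¹' Set.Icc (update 0 i α) (update 1 i β) := fun y ⟨hy, hxy⟩ => by
    rw [Set.mem_preimage, hMy]
    exact ⟨update_le_update_iff.2 ⟨hxy.1, fun j _ => hy.1 j⟩,
      update_le_update_iff.2 ⟨hxy.2, fun j _ => hy.2 j⟩⟩
  have hbox : volume (Set.Icc (update (0 : ι → ℝ) i α) (update 1 i β)) =
      ENNReal.ofReal (β - α) := by
    rw [Real.volume_Icc_pi, prod_eq_single i (fun j _ hj => by simp [update_of_ne hj]) (by simp),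
      update_self, update_self]
  refine (measure_mono hsub).trans_eq ?_
  rw [Measure.addHaar_preimage_linearMap _ (by rwa [hdet]), hdet, hbox,
    ← ENNReal.ofReal_mul (abs_nonneg _), abs_inv, inv_mul_eq_div]

lemma volume_slab_le (hx : x ≠ 0) :
    volume (Set.Icc (0 : ι → ℝ) 1 ∩ {y | x ⬝ᵥ y ∈ Set.Icc α β}) ≤
      ENNReal.ofReal ((β - α) / ‖x‖) := by
  obtain ⟨j, -⟩ := Function.ne_iff.1 hx
  have : Nonempty ι := ⟨j⟩
  obtain ⟨i, hi⟩ := Finite.exists_max fun i => |x i|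
  have hnorm : |x i| = ‖x‖ := (norm_le_pi_norm x i).antisymm ((pi_norm_le_iff_of_nonempty x).2 hi)
  rw [← hnorm]
  exact volume_slab_le_of_apply_ne_zero (abs_ne_zero.1 (hnorm.trans_ne (norm_ne_zero_iff.2 hx)))

lemma integral_mul_trapezoid_le {χ : (ι → ℝ) → ℝ} {B δ : ℝ} (hχs : support χ ⊆ Set.Icc 0 1)
    (hχ0 : ∀ y, 0 ≤ χ y) (hχB : ∀ y, χ y ≤ B) (hδ : 0 < δ) (hαβ : α ≤ β)
    (hx : x ≠ 0) :
    ∫ y, χ y * trapezoid δ α β (x ⬝ᵥ y) ≤ B * ((β - α + 2 * δ) / ‖x‖) := by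
  set S : Set (ι → ℝ) := Set.Icc 0 1 ∩ {y | x ⬝ᵥ y ∈ Set.Icc (α - δ) (β + δ)}
  have hSm : MeasurableSet S :=
    measurableSet_Icc.inter ((by fun_prop : Measurable fun y => x ⬝ᵥ y) measurableSet_Icc)
  have hvol : volume S ≤ ENNReal.ofReal ((β - α + 2 * δ) / ‖x‖) := by
    convert volume_slab_le (α := α - δ) (β := β + δ) hx using 3
    ring
  have hSfin : volume S ≠ ⊤ := ne_top_of_le_ne_top ENNReal.ofReal_ne_top hvol
  have hle : ∀ y, χ y * trapezoid δ α β (x ⬝ᵥ y) ≤ S.indicator (fun _ => B) y := fun y => by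
    by_cases hy : y ∈ Set.Icc (0 : ι → ℝ) 1
    · refine (mul_le_mul (hχB y) (trapezoid_le_indicator hδ hαβ _)
        (trapezoid_mem_Icc hδ hαβ _).1 ((hχ0 y).trans (hχB y))).trans_eq ?_
      by_cases hxy : x ⬝ᵥ y ∈ Set.Icc (α - δ) (β + δ)
      · have hyS : y ∈ S := ⟨hy, hxy⟩
        rw [Set.indicator_of_mem hxy, Set.indicator_of_mem hyS, Pi.one_apply, mul_one]
      · rw [Set.indicator_of_notMem hxy, Set.indicator_of_notMem fun h => hxy h.2, mul_zero]
    · rw [notMem_support.1 fun h => hy (hχs h), zero_mul, Set.indicator_of_notMem fun h => hy h.1]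
  calc ∫ y, χ y * trapezoid δ α β (x ⬝ᵥ y) ≤ ∫ y, S.indicator (fun _ => B) y :=
        integral_mono_of_nonneg
          (.of_forall fun y => mul_nonneg (hχ0 y) (trapezoid_mem_Icc hδ hαβ _).1)
          ((integrable_indicator_iff hSm).2 (integrableOn_const hSfin)) (.of_forall hle)
    _ = B * volume.real S := by
        rw [integral_indicator hSm, setIntegral_const, smul_eq_mul, mul_comm]
    _ ≤ B * ((β - α + 2 * δ) / ‖x‖) := by
        gcongr
        · exact (hχ0 0).trans (hχB 0)
        · exact ENNReal.toReal_le_of_le_ofReal (div_nonneg (by linarith) (norm_nonneg x)) hvol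

end Slab

section SlabDiscrepancy

variable {ι : Type*} [Fintype ι] {x : ι → ℝ} {ψ χ : (ι → ℝ) → ℝ} {w : ℕ → ι → ℝ} {N : ℕ}
  {A B ε δ a b c : ℝ}

lemma integrable_mul_trapezoid (hψ : Integrable ψ) (hδ : 0 < δ) (hab : a ≤ b) (x : ι → ℝ) :
    Integrable fun y => ψ y * trapezoid δ a b (x ⬝ᵥ y) :=
  hψ.mul_bdd (c := 1) (by fun_prop) (.of_forall fun y => by
    rw [Real.norm_of_nonneg (trapezoid_mem_Icc hδ hab _).1]
    exact (trapezoid_mem_Icc hδ hab _).2)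

lemma integrable_mul_indicator_Icc (hψ : Integrable ψ) (a b : ℝ) (x : ι → ℝ) :
    Integrable fun y => ψ y * (Set.Icc a b).indicator (1 : ℝ → ℝ) (x ⬝ᵥ y) :=
  hψ.mul_bdd (c := 1) (((measurable_const.indicator measurableSet_Icc).comp
      (by fun_prop : Measurable fun y => x ⬝ᵥ y)).aestronglyMeasurable)
    (.of_forall fun y => by
      simpa using norm_indicator_le_norm_self (s := Set.Icc a b) (1 : ℝ → ℝ) (x ⬝ᵥ y))

lemma abs_discrepancy_indicator_le_trapezoid (hψ : Integrable ψ) (hχ : Integrable χ)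
    (hψχ : ∀ y, |ψ y| ≤ χ y) (hδ : 0 < δ) (hab : a ≤ b) (x : ι → ℝ) :
    |discrepancy ψ w N fun y => (Set.Icc a b).indicator (1 : ℝ → ℝ) (x ⬝ᵥ y)| ≤
      |discrepancy ψ w N fun y => trapezoid δ a b (x ⬝ᵥ y)| +
      |discrepancy χ w N fun y => trapezoid δ (a - δ) a (x ⬝ᵥ y)| +
      |discrepancy χ w N fun y => trapezoid δ b (b + δ) (x ⬝ᵥ y)| +
      2 * N * ((∫ y, χ y * trapezoid δ (a - δ) a (x ⬝ᵥ y)) +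
        ∫ y, χ y * trapezoid δ b (b + δ) (x ⬝ᵥ y)) := by
  have hleft := integrable_mul_trapezoid hχ hδ (sub_le_self a hδ.le) x
  have hright := integrable_mul_trapezoid hχ hδ (le_add_of_nonneg_right hδ.le : b ≤ b + δ) x
  have hsum := hleft.add hright
  simp only [Pi.add_def, ← mul_add] at hsum
  refine (abs_discrepancy_le_of_abs_sub_le hψχ (fun y => abs_indicator_sub_trapezoid_le hδ hab _)
    (integrable_mul_indicator_Icc hψ a b x) (integrable_mul_trapezoid hψ hδ hab x) hsum).trans ?_
  rw [discrepancy_add (by simpa only [smul_eq_mul]) (by simpa only [smul_eq_mul]),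
    add_assoc (|discrepancy ψ _ _ _|)]
  simp only [mul_add (χ _), integral_add hleft hright]
  linarith [abs_add_le (discrepancy χ w N fun y => trapezoid δ (a - δ) a (x ⬝ᵥ y))
    (discrepancy χ w N fun y => trapezoid δ b (b + δ) (x ⬝ᵥ y))]

lemma CharDiscrepancyLE.abs_discrepancy_trapezoid_inv_le (h : CharDiscrepancyLE ψ w N A ε)
    (hψ : Integrable ψ) (hψs : support ψ ⊆ Set.Icc 0 1)
    (hw : ∀ n, w n ∈ Set.Icc (0 : ι → ℝ) 1) (hε : 0 < ε) (hε' : ε ≤ 1 / 2) (hN : 1 ≤ N)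
    (hx : ‖x‖ ≤ 1) (ha : -1 ≤ a) (hab : a ≤ b) (hb : b ≤ Fintype.card ι + 1) :
    |discrepancy ψ w N fun y => trapezoid (N : ℝ)⁻¹ a b (x ⬝ᵥ y)| ≤
      A * (((3 * Fintype.card ι + 3) * N) ^ (2 * ε) * ∑' n : ℤ, (1 + |(n : ℝ)|) ^ (-(1 + ε))) := by
  have hN1 : (1 : ℝ) ≤ N := by exact_mod_cast hN
  convert h.abs_discrepancy_trapezoid_le (R := Fintype.card ι + 1) (a := a) (b := b) hψ hψs hw hε
    hε' hx (abs_le.2 ⟨by linarith, by linarith⟩) (abs_le.2 ⟨by linarith, by linarith⟩)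
    (inv_pos.2 (zero_lt_one.trans_le hN1)) (inv_le_one_of_one_le₀ hN1) using 4
  rw [div_inv_eq_mul]
  ring

lemma CharDiscrepancyLE.abs_discrepancy_indicator_le_of_ne_zero
    (hψA : CharDiscrepancyLE ψ w N A ε) (hχA : CharDiscrepancyLE χ w N A ε)
    (hψ : Integrable ψ) (hψs : support ψ ⊆ Set.Icc 0 1)
    (hχ : Integrable χ) (hχs : support χ ⊆ Set.Icc 0 1) (hψχ : ∀ y, |ψ y| ≤ χ y)
    (hχB : ∀ y, χ y ≤ B) (hw : ∀ n, w n ∈ Set.Icc (0 : ι → ℝ) 1) (hε : 0 < ε) (hε' : ε ≤ 1 / 2)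
    (hN : 1 ≤ N) (hx : ‖x‖ ≤ 1) (hx0 : x ≠ 0) (ha : 0 ≤ a) (hab : a ≤ b)
    (hb : b ≤ Fintype.card ι) :
    |discrepancy ψ w N fun y => (Set.Icc a b).indicator (1 : ℝ → ℝ) (x ⬝ᵥ y)| ≤
      3 * (A * (((3 * Fintype.card ι + 3) * N) ^ (2 * ε) *
        ∑' n : ℤ, (1 + |(n : ℝ)|) ^ (-(1 + ε)))) + 12 * B / ‖x‖ := by
  have hN1 : (1 : ℝ) ≤ N := by exact_mod_cast hN
  have hδ : (0 : ℝ) < (N : ℝ)⁻¹ := inv_pos.2 (zero_lt_one.trans_le hN1)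
  have hδ1 : (N : ℝ)⁻¹ ≤ 1 := inv_le_one_of_one_le₀ hN1
  have hint : ∀ u v : ℝ, v - u = (N : ℝ)⁻¹ →
      2 * N * ∫ y, χ y * trapezoid (N : ℝ)⁻¹ u v (x ⬝ᵥ y) ≤ 6 * B / ‖x‖ := fun u v huv => by
    calc 2 * N * ∫ y, χ y * trapezoid (N : ℝ)⁻¹ u v (x ⬝ᵥ y)
        ≤ 2 * N * (B * ((v - u + 2 * (N : ℝ)⁻¹) / ‖x‖)) := by
          gcongr
          exact integral_mul_trapezoid_le hχs (fun y => (abs_nonneg _).trans (hψχ y)) hχB hδ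
            (by linarith) hx0
      _ = 6 * B / ‖x‖ := by
          rw [huv]
          field_simp
          ring
  have hmain := abs_discrepancy_indicator_le_trapezoid (w := w) (N := N) hψ hχ hψχ hδ hab x
  rw [mul_add (2 * N : ℝ)] at hmain
  have hmid := hψA.abs_discrepancy_trapezoid_inv_le (a := a) (b := b) hψ hψs hw hε hε' hN hx
    (by linarith) hab (by linarith)
  have hleft := hχA.abs_discrepancy_trapezoid_inv_le (a := a - (N : ℝ)⁻¹) (b := a) hχ hχs hw hε
    hε' hN hx (by linarith) (by linarith) (by linarith)
  have hright := hχA.abs_discrepancy_trapezoid_inv_le (a := b) (b := b + (N : ℝ)⁻¹) hχ hχs hw hε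
    hε' hN hx (by linarith) (by linarith) (by linarith)
  have hBx : 12 * B / ‖x‖ = 6 * B / ‖x‖ + 6 * B / ‖x‖ := by ring
  linarith [hint (a - (N : ℝ)⁻¹) a (by ring), hint b (b + (N : ℝ)⁻¹) (by ring)]

lemma CharDiscrepancyLE.abs_discrepancy_indicator_le
    (hψA : CharDiscrepancyLE ψ w N A ε) (hχA : CharDiscrepancyLE χ w N A ε)
    (hψ : Integrable ψ) (hψs : support ψ ⊆ Set.Icc 0 1)
    (hχ : Integrable χ) (hχs : support χ ⊆ Set.Icc 0 1) (hψχ : ∀ y, |ψ y| ≤ χ y)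
    (hχB : ∀ y, χ y ≤ B) (hw : ∀ n, w n ∈ Set.Icc (0 : ι → ℝ) 1) (hε : 0 < ε) (hε' : ε ≤ 1 / 2)
    (hN : 1 ≤ N) (hx : ‖x‖ ≤ 1) (hc : 0 < c) (hca : c ≤ a) (hab : a ≤ b) :
    |discrepancy ψ w N fun y => (Set.Icc a b).indicator (1 : ℝ → ℝ) (x ⬝ᵥ y)| ≤
      3 * (A * (((3 * Fintype.card ι + 3) * N) ^ (2 * ε) *
        ∑' n : ℤ, (1 + |(n : ℝ)|) ^ (-(1 + ε)))) + 12 * B * (Fintype.card ι / c) := by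
  have hA := hψA.nonneg
  have hB : 0 ≤ B := (abs_nonneg _).trans ((hψχ 0).trans (hχB 0))
  have hcard : (0 : ℝ) ≤ Fintype.card ι := Nat.cast_nonneg _
  have hxy : ∀ y ∈ Set.Icc (0 : ι → ℝ) 1, x ⬝ᵥ y ≤ Fintype.card ι * ‖x‖ := fun y hy =>
    (le_abs_self _).trans (abs_dotProduct_le hy x)
  rcases lt_or_ge (Fintype.card ι * ‖x‖) a with hslab | hslab
  · rw [discrepancy_eq_zero hψs fun y hy => Set.indicator_of_notMem
      (fun h => (hslab.trans_le h.1).not_ge (hxy y hy)) _, abs_zero]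
    positivity
  have hx0 : 0 < ‖x‖ := pos_of_mul_pos_right ((hc.trans_le hca).trans_le hslab) hcard
  have hac : a ≤ Fintype.card ι := hslab.trans (mul_le_of_le_one_right hcard hx)
  have hmin : Set.EqOn (fun y => (Set.Icc a b).indicator (1 : ℝ → ℝ) (x ⬝ᵥ y))
      (fun y => (Set.Icc a (min b (Fintype.card ι))).indicator 1 (x ⬝ᵥ y)) (Set.Icc 0 1) :=
    fun y hy => by
      have hle := (hxy y hy).trans (mul_le_of_le_one_right hcard hx)
      simp only [Set.indicator_apply, Set.mem_Icc, le_min_iff, hle, and_true]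
  rw [discrepancy_congr hψs hmin]
  refine (hψA.abs_discrepancy_indicator_le_of_ne_zero hχA hψ hψs hχ hχs hψχ hχB hw hε hε' hN hx
    (norm_pos_iff.1 hx0) (hc.le.trans hca) (le_min hab hac) (min_le_right _ _)).trans ?_
  rw [← mul_div_assoc]
  gcongr 3 * _ + ?_
  rw [div_le_div_iff₀ hx0 hc]
  nlinarith

end SlabDiscrepancy

lemma exists_contDiff_majorant {E : Type*} [NormedAddCommGroup E] [NormedSpace ℝ E]
    [FiniteDimensional ℝ E] {ψ : E → ℝ} {U : Set E} (hψ : Continuous ψ)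
    (hψc : HasCompactSupport ψ) (hU : IsOpen U) (hψU : tsupport ψ ⊆ U) :
    ∃ (χ : E → ℝ) (B : ℝ), ContDiff ℝ ∞ χ ∧ tsupport χ ⊆ U ∧ (∀ x, |ψ x| ≤ χ x) ∧
      ∀ x, χ x ≤ B := by
  obtain ⟨B, hB⟩ := hψ.bounded_above_of_compact_support hψc
  have hB0 : 0 ≤ B := (norm_nonneg _).trans (hB 0)
  obtain ⟨f, hf0, hf1, hf⟩ := exists_contMDiffMap_zero_one_nhds_of_isClosed (n := ⊤)
    (modelWithCornersSelf ℝ E) hU.isClosed_compl (isClosed_tsupport ψ)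
    (Set.disjoint_compl_left_iff_subset.2 hψU)
  have hfU : tsupport f ⊆ U := fun x hx => by
    by_contra hxU
    exact notMem_tsupport_iff_eventuallyEq.2 (eventually_nhdsSet_iff_forall.1 hf0 x hxU) hx
  refine ⟨fun x => B * f x, B, contDiff_const.mul f.contMDiff.contDiff,
    (tsupport_mul_subset_right ..).trans hfU, fun x => ?_,
    fun x => mul_le_of_le_one_right hB0 (hf x).2⟩
  by_cases hx : x ∈ tsupport ψ
  · simpa only [hf1.self_of_nhdsSet x hx, mul_one, Real.norm_eq_abs] using hB x
  · rw [image_eq_zero_of_notMem_tsupport hx, abs_zero]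
    exact mul_nonneg hB0 (hf x).1

section UniformDistribution

variable {d : ℕ} {γ c ε : ℝ} {v w : ℕ → Fin d → ℝ} {φ ψ : (Fin d → ℝ) → ℝ}

lemma intNorm_le_sqrt_mul_norm (l : Fin d → ℤ) : intNorm l ≤ √d * ‖l‖ := by
  refine Real.sqrt_le_iff.2 ⟨by positivity, ?_⟩
  calc ∑ i, (l i : ℝ) ^ 2 ≤ ∑ _i : Fin d, ‖l‖ ^ 2 := by
        refine sum_le_sum fun i _ => ?_
        rw [← sq_abs, ← Real.norm_eq_abs, Int.norm_cast_real]
        gcongr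
        exact norm_le_pi_norm l i
    _ = (√d * ‖l‖) ^ 2 := by
        rw [mul_pow, Real.sq_sqrt d.cast_nonneg, sum_const, card_univ, Fintype.card_fin,
          nsmul_eq_mul]

lemma IsGammaUD.exists_norm_sum_fourierChar_le (hw : IsGammaUD γ w) (hε : 0 < ε) :
    ∃ C : ℝ, 0 ≤ C ∧ ∀ l : Fin d → ℤ, l ≠ 0 → ∀ N : ℕ, 1 ≤ N →
      ‖∑ n ∈ range N, (𝐞 (((↑) ∘ l : Fin d → ℝ) ⬝ᵥ w n) : ℂ)‖ ≤
        C * (N : ℝ) ^ (1 - γ) * ‖l‖ ^ ε := by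
  obtain ⟨C, hC, h⟩ := hw ε hε
  refine ⟨C * √d ^ ε, by positivity, fun l hl N hN => ?_⟩
  have hN0 : (0 : ℝ) < N := by exact_mod_cast hN
  have hchar : ∀ n, Complex.exp (2 * Real.pi * Complex.I * (∑ i, (l i : ℝ) * w n i)) =
      𝐞 (((↑) ∘ l : Fin d → ℝ) ⬝ᵥ w n) := fun n => by
    rw [Real.fourierChar_apply]
    simp only [dotProduct, comp_apply]
    push_cast
    ring_nf
  have hsum := h l hl N hN
  simp only [hchar] at hsum
  rw [norm_mul, norm_inv, Complex.norm_natCast, inv_mul_le_iff₀ hN0] at hsum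
  calc _ ≤ N * (C * intNorm l ^ ε * (N : ℝ) ^ (-γ)) := hsum
    _ ≤ N * (C * (√d * ‖l‖) ^ ε * (N : ℝ) ^ (-γ)) := by
        gcongr
        · exact Real.sqrt_nonneg _
        · exact intNorm_le_sqrt_mul_norm l
    _ = C * √d ^ ε * (N : ℝ) ^ (1 - γ) * ‖l‖ ^ ε := by
        rw [Real.mul_rpow (Real.sqrt_nonneg _) (norm_nonneg _), sub_eq_add_neg,
          Real.rpow_add hN0, Real.rpow_one]
        ring

lemma IsGammaUD.exists_charDiscrepancyLE (hUD : IsGammaUD γ w)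
    (hw : ∀ n, w n ∈ Set.Icc (0 : Fin d → ℝ) 1) (hψ : ContDiff ℝ ∞ ψ)
    (hψs : tsupport ψ ⊆ openUnitCube (Fin d)) (hε : 0 < ε) :
    ∃ C : ℝ, 0 ≤ C ∧ ∀ N : ℕ, 1 ≤ N → CharDiscrepancyLE ψ w N (C * (N : ℝ) ^ (1 - γ)) ε := by
  obtain ⟨C₁, hC₁, h₁⟩ := _root_.exists_charDiscrepancyLE hψ hψs hε.le
  obtain ⟨C₂, hC₂, h₂⟩ := hUD.exists_norm_sum_fourierChar_le hε
  refine ⟨C₁ * C₂, mul_nonneg hC₁ hC₂, fun N hN => ?_⟩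
  rw [mul_assoc]
  exact h₁ w N _ hw (by positivity) fun l hl => h₂ l hl N hN

lemma IsGammaUD.exists_abs_discrepancy_indicator_le (hUD : IsGammaUD γ w) (hγ : γ ≤ 1)
    (hw : ∀ n, w n ∈ Set.Icc (0 : Fin d → ℝ) 1) (hψ : ContDiff ℝ ∞ ψ)
    (hψs : tsupport ψ ⊆ openUnitCube (Fin d)) (hc : 0 < c) (hε : 0 < ε) :
    ∃ C : ℝ, 0 ≤ C ∧ ∀ a b : ℝ, c ≤ a → a ≤ b → ∀ N : ℕ, 1 ≤ N → ∀ x : Fin d → ℝ, ‖x‖ ≤ 1 →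
      |discrepancy ψ w N fun y => (Set.Icc a b).indicator (1 : ℝ → ℝ) (x ⬝ᵥ y)| ≤
        C * (N : ℝ) ^ (1 - γ + ε) := by
  obtain ⟨χ, B, hχ, hχs, hψχ, hχB⟩ := exists_contDiff_majorant hψ.continuous
    (hasCompactSupport_of_tsupport_subset_openUnitCube hψs) isOpen_openUnitCube hψs
  have hB : 0 ≤ B := (abs_nonneg _).trans ((hψχ 0).trans (hχB 0))
  obtain ⟨η, hη, hηε, hη'⟩ : ∃ η : ℝ, 0 < η ∧ 2 * η ≤ ε ∧ η ≤ 1 / 2 :=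
    ⟨min (ε / 2) (1 / 2), by positivity, by linarith [min_le_left (ε / 2) (1 / 2)],
      min_le_right _ _⟩
  obtain ⟨C₁, hC₁, h₁⟩ := hUD.exists_charDiscrepancyLE hw hψ hψs hη
  obtain ⟨C₂, hC₂, h₂⟩ := hUD.exists_charDiscrepancyLE hw hχ hχs hη
  set S : ℝ := ∑' n : ℤ, (1 + |(n : ℝ)|) ^ (-(1 + η))
  refine ⟨3 * ((C₁ + C₂) * ((3 * d + 3) ^ (2 * η) * S)) + 12 * B * (d / c), by positivity,
    fun a b hca hab N hN x hx => ?_⟩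
  have hN1 : (1 : ℝ) ≤ N := by exact_mod_cast hN
  have hN0 : (0 : ℝ) < N := zero_lt_one.trans_le hN1
  have hpow : (N : ℝ) ^ (1 - γ) * (N : ℝ) ^ (2 * η) ≤ (N : ℝ) ^ (1 - γ + ε) := by
    rw [← Real.rpow_add hN0]
    exact Real.rpow_le_rpow_of_exponent_le hN1 (by linarith)
  have hone : 1 ≤ (N : ℝ) ^ (1 - γ + ε) := Real.one_le_rpow hN1 (by linarith)
  refine (CharDiscrepancyLE.abs_discrepancy_indicator_le (A := (C₁ + C₂) * (N : ℝ) ^ (1 - γ))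
    ((h₁ N hN).mono (by gcongr; linarith)) ((h₂ N hN).mono (by gcongr; linarith))
    (integrable_of_tsupport_subset_openUnitCube hψ.continuous hψs)
    (support_subset_Icc_of_tsupport_subset_openUnitCube hψs)
    (integrable_of_tsupport_subset_openUnitCube hχ.continuous hχs)
    (support_subset_Icc_of_tsupport_subset_openUnitCube hχs) hψχ hχB hw hη hη' hN hx hc hca
    hab).trans ?_
  calc _ = 3 * ((C₁ + C₂) * ((3 * d + 3) ^ (2 * η) * S)) *
        ((N : ℝ) ^ (1 - γ) * (N : ℝ) ^ (2 * η)) + 12 * B * (d / c) * 1 := by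
        rw [Fintype.card_fin, Real.mul_rpow (by positivity) hN0.le]
        ring
    _ ≤ 3 * ((C₁ + C₂) * ((3 * d + 3) ^ (2 * η) * S)) * (N : ℝ) ^ (1 - γ + ε) +
        12 * B * (d / c) * (N : ℝ) ^ (1 - γ + ε) := by gcongr
    _ = _ := by ring

lemma IsGammaUD.exists_abs_sum_sum_sub_integral_integral_le (hUDv : IsGammaUD γ v)
    (hUDw : IsGammaUD γ w) (hγ : γ ≤ 1) (hv : ∀ n, v n ∈ Set.Icc (0 : Fin d → ℝ) 1)
    (hw : ∀ m, w m ∈ Set.Icc (0 : Fin d → ℝ) 1) (hφ : ContDiff ℝ ∞ φ)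
    (hφs : tsupport φ ⊆ openUnitCube (Fin d)) (hψ : ContDiff ℝ ∞ ψ)
    (hψs : tsupport ψ ⊆ openUnitCube (Fin d)) (hc : 0 < c) (hε : 0 < ε) :
    ∃ C : ℝ, 0 ≤ C ∧ ∀ a b : ℝ, c ≤ a → a ≤ b → ∀ N : ℕ, 1 ≤ N →
      |∑ n ∈ range N, ∑ m ∈ range N,
          φ (v n) * ψ (w m) * (Set.Icc a b).indicator (1 : ℝ → ℝ) (v n ⬝ᵥ w m) -
        (N : ℝ) ^ 2 * ∫ x, ∫ y, φ x * ψ y * (Set.Icc a b).indicator (1 : ℝ → ℝ) (x ⬝ᵥ y)| ≤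
        C * (N : ℝ) ^ (2 - γ + ε) := by
  obtain ⟨D, hD⟩ := hφ.continuous.bounded_above_of_compact_support
    (hasCompactSupport_of_tsupport_subset_openUnitCube hφs)
  have hD0 : 0 ≤ D := (norm_nonneg _).trans (hD 0)
  obtain ⟨C₁, hC₁, h₁⟩ := hUDv.exists_abs_discrepancy_indicator_le hγ hv hφ hφs hc hε
  obtain ⟨C₂, hC₂, h₂⟩ := hUDw.exists_abs_discrepancy_indicator_le hγ hw hψ hψs hc hε
  refine ⟨(D + ∫ y, |ψ y|) * (C₁ + C₂), by positivity, fun a b hca hab N hN => ?_⟩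
  have hN0 : (0 : ℝ) < N := by exact_mod_cast hN
  have hK : Measurable (uncurry fun x y : Fin d → ℝ =>
      (Set.Icc a b).indicator (1 : ℝ → ℝ) (x ⬝ᵥ y)) :=
    (measurable_const.indicator measurableSet_Icc).comp
      (by fun_prop : Measurable fun p : (Fin d → ℝ) × (Fin d → ℝ) => p.1 ⬝ᵥ p.2)
  have hmain := abs_sum_sum_sub_integral_integral_le (N := N) (v := v) (w := w) (B := 1)
    (A := (C₁ + C₂) * (N : ℝ) ^ (1 - γ + ε))
    (integrable_of_tsupport_subset_openUnitCube hφ.continuous hφs)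
    (integrable_of_tsupport_subset_openUnitCube hψ.continuous hψs)
    (support_subset_Icc_of_tsupport_subset_openUnitCube hψs) hv hK
    (fun x y => by simpa using norm_indicator_le_norm_self (s := Set.Icc a b) (1 : ℝ → ℝ) (x ⬝ᵥ y))
    hD
    (fun x hx => (h₂ a b hca hab N hN x (norm_le_one_of_mem_Icc hx)).trans
      (by gcongr; linarith))
    (fun y hy => by
      simp only [dotProduct_comm _ y]
      exact (h₁ a b hca hab N hN y (norm_le_one_of_mem_Icc hy)).trans (by gcongr; linarith))
  refine hmain.trans_eq ?_
  rw [show 2 - γ + ε = 1 + (1 - γ + ε) by ring, Real.rpow_add hN0 1, Real.rpow_one]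
  ring

end UniformDistribution

open scoped Classical in
theorem stmt11_general {d : ℕ} {γ c : ℝ} (hγ : γ ≤ 1) (hc : 0 < c) {v w : ℕ → Fin d → ℝ}
    (hv : ∀ n, v n ∈ Set.Icc (0 : Fin d → ℝ) 1) (hw : ∀ m, w m ∈ Set.Icc (0 : Fin d → ℝ) 1)
    (hUDv : IsGammaUD γ v) (hUDw : IsGammaUD γ w) {φ ψ : (Fin d → ℝ) → ℝ}
    (hφ : ContDiff ℝ ∞ φ) (hφs : tsupport φ ⊆ openUnitCube (Fin d))
    (hψ : ContDiff ℝ ∞ ψ) (hψs : tsupport ψ ⊆ openUnitCube (Fin d)) {ε : ℝ} (hε : 0 < ε) :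
    ∃ C : ℝ, 0 < C ∧ ∀ a b : ℝ, c ≤ a → a ≤ b → ∀ N : ℕ, 1 ≤ N →
      |(∑ p ∈ (range N ×ˢ range N).filter
            (fun p => a ≤ dotP (v p.1) (w p.2) ∧ dotP (v p.1) (w p.2) ≤ b),
          φ (v p.1) * ψ (w p.2)) -
        (N : ℝ) ^ 2 * ∫ x : Fin d → ℝ, ∫ y : Fin d → ℝ,
          (if a ≤ dotP x y ∧ dotP x y ≤ b then φ x * ψ y else 0)| ≤
        C * (N : ℝ) ^ (2 - γ + ε) := by
  obtain ⟨C, hC, h⟩ := hUDv.exists_abs_sum_sum_sub_integral_integral_le hUDw hγ hv hw hφ hφs hψ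
    hψs hc hε
  refine ⟨C + 1, by positivity, fun a b hca hab N hN => ?_⟩
  have hslab : ∀ x y : Fin d → ℝ, (if a ≤ dotP x y ∧ dotP x y ≤ b then φ x * ψ y else 0) =
      φ x * ψ y * (Set.Icc a b).indicator (1 : ℝ → ℝ) (x ⬝ᵥ y) := fun x y => by
    simp only [dotP, dotProduct, Set.indicator_apply, Set.mem_Icc, Pi.one_apply, mul_ite, mul_one,
      mul_zero]
    congr
  simp only [sum_filter, sum_product, hslab]
  exact (h a b hca hab N hN).trans (by gcongr; linarith)

open scoped Classical in
/-- Slab incidence theorem: for `γ`-uniformly distributed sequences `{v_n}`, `{w_m}` in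
`[0,1]^d` and a smooth cutoff `ψ` supported in the open cube,
`∑_{a ≤ v_n·w_m ≤ b} ψ(v_n)ψ(w_m) = N² ∬_{Ω_{a,b}} ψ(x)ψ(y) dx dy + O_ε(N^{2-γ+ε})`. -/
theorem stmt11 (d : ℕ) (hd : 2 ≤ d) (γ : ℝ) (hγ : γ ∈ Set.Ioc (0:ℝ) (1/2))
    (v w : ℕ → Fin d → ℝ)
    (hv : ∀ n, v n ∈ Set.Icc (0 : Fin d → ℝ) 1) (hw : ∀ m, w m ∈ Set.Icc (0 : Fin d → ℝ) 1)
    (hUDv : IsGammaUD γ v) (hUDw : IsGammaUD γ w)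
    (ψ : (Fin d → ℝ) → ℝ) (hψsmooth : ContDiff ℝ (⊤ : ℕ∞) ψ) (hψpos : 0 ≤ ψ)
    (hψsupp : tsupport ψ ⊆ {x | ∀ i, x i ∈ Set.Ioo (0:ℝ) 1}) :
    ∀ ε : ℝ, 0 < ε → ∃ C : ℝ, 0 < C ∧
      ∀ a b : ℝ, 1/100 ≤ a → a ≤ b → ∀ N : ℕ, 1 ≤ N →
        |(∑ p ∈ ((Finset.range N) ×ˢ (Finset.range N)).filter
              (fun p => a ≤ dotP (v p.1) (w p.2) ∧ dotP (v p.1) (w p.2) ≤ b),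
            ψ (v p.1) * ψ (w p.2))
          - (N : ℝ) ^ 2 *
            ∫ x : Fin d → ℝ, ∫ y : Fin d → ℝ,
              (if a ≤ dotP x y ∧ dotP x y ≤ b then ψ x * ψ y else 0)|
        ≤ C * (N : ℝ) ^ (2 - γ + ε) := by
  intro ε hε
  exact stmt11_general (hγ.2.trans (by norm_num)) (by norm_num) hv hw hUDv hUDw hψsmooth hψsupp
    hψsmooth hψsupp hε
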